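/- Let G be a finite non-cyclic nilpotent group whose order is not a prime power. Then D(G) is connected and: the diameter of D(G) equals 2 if the exponent of G is square-free; it equals 4 if G is a Ψ-group; and it equals 3 in all remaining cases. -/

import Mathlib

/-- Adjacency in the difference of the enhanced power graph and the power graph:
`⟨x, y⟩` is cyclic but neither of `x`, `y` is a power of the other. -/
def diffAdj {G : Type*} [Group G] (x y : G) : Prop :=
  IsCyclic (Subgroup.closure ({x, y} : Set G)) ∧
    (¬ ∃ k : ℤ, y = x ^ k) ∧ (¬ ∃ k : ℤ, x = y ^ k)

/-- The vertex set of the difference graph `𝒟(G)`: the elements of `G` that are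
non-isolated in the difference of the enhanced power graph and the power graph. -/
abbrev DiffVertex (G : Type*) [Group G] := {x : G // ∃ y, diffAdj x y}

/-- The difference graph `𝒟(G)` of a group `G`. -/
def diffGraph (G : Type*) [Group G] : SimpleGraph (DiffVertex G) :=
  SimpleGraph.fromRel (fun a b => diffAdj a.val b.val)

/-- A dominating set of a graph: every vertex is in `S` or adjacent to a vertex of `S`. -/
def IsDominatingSet {V : Type*} (Γ : SimpleGraph V) (S : Set V) : Prop :=
  ∀ v : V, v ∈ S ∨ ∃ u ∈ S, Γ.Adj u v

/-- The domination number of a graph: the least size of a dominating set. -/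
noncomputable def dominationNumber {V : Type*} (Γ : SimpleGraph V) : ℕ :=
  sInf {n : ℕ | ∃ S : Set V, IsDominatingSet Γ S ∧ S.ncard = n}

/-- A maximal cyclic subgroup: a cyclic subgroup not properly contained in
another cyclic subgroup. -/
def IsMaxCyclic {G : Type*} [Group G] (C : Subgroup G) : Prop :=
  IsCyclic C ∧ ∀ D : Subgroup G, IsCyclic D → C ≤ D → C = D

/-- A `Ψ`-group: a group having a Sylow `p`-subgroup `P` with two distinct cyclic
subgroups of the same order, neither of which is a maximal cyclic subgroup of `P`. -/
def IsPsiGroup (G : Type*) [Group G] : Prop :=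
  ∃ (p : ℕ), p.Prime ∧ ∃ (P : Sylow p G) (u v : G),
    u ∈ (P : Subgroup G) ∧ v ∈ (P : Subgroup G) ∧
    Subgroup.zpowers u ≠ Subgroup.zpowers v ∧ orderOf u = orderOf v ∧
    (∃ w ∈ (P : Subgroup G), Subgroup.zpowers u < Subgroup.zpowers w) ∧
    (∃ w ∈ (P : Subgroup G), Subgroup.zpowers v < Subgroup.zpowers w)

/-!
Send each element of a finite nilpotent group to the tuple of cyclic subgroups generated by its
components in the Sylow subgroups. As the Sylow subgroups have coprime orders, `x` is a power of `y`
exactly when the tuple of `x` lies below the tuple of `y`. So the difference graph is the pull-back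
of the graph, on a product of posets, that joins incomparable elements having a common upper bound.
Each factor is a forest: below any cyclic `p`-subgroup, the cyclic subgroups form a chain.

In a product of forests a vertex is non-isolated iff some coordinate can be raised while another one
is nonzero, and paths run through tuples with few nonzero coordinates. This always gives distance at
most `4`; it gives at most `3` if the non-maximal elements of every factor form a chain, and at most
`2` if every non-maximal element is the bottom. If a factor has a non-maximal element `a ≠ ⊥`, the
tuple with `a` there and maximal elements elsewhere is at distance more than `2` from the tuple with
`a` there and `⊥` elsewhere; if it has two incomparable non-maximal elements, completing both by
maximal elements gives distance more than `3`. The two conditions translate into the exponent not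
being square-free and into the group being a `Ψ`-group.
-/

/-! ### Distances in a pull-back of a graph -/

section Graph

open SimpleGraph

variable {V W : Type*} {Γ : SimpleGraph W}

theorem edist_map_le {Δ : SimpleGraph V} (f : Δ →g Γ) (u v : V) :
    Γ.edist (f u) (f v) ≤ Δ.edist u v :=
  le_iInf fun p => by simpa using (p.map f).edist_le

theorem three_lt_edist {u v : W}
    (h : ∀ w z, Γ.edist u w ≤ 1 → Γ.edist z v ≤ 1 → ¬ Γ.edist w z ≤ 1) : 3 < Γ.edist u v := by
  by_contra! hle
  obtain ⟨p, hp⟩ := exists_walk_of_edist_ne_top (hle.trans_lt (by decide)).ne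
  have step (k : ℕ) : Γ.edist (p.getVert k) (p.getVert (k + 1)) ≤ 1 := by
    rw [edist_le_one_iff_adj_or_eq]
    rcases lt_or_ge k p.length with hk | hk
    · exact .inl (p.adj_getVert_succ hk)
    · exact .inr (by rw [p.getVert_of_length_le hk, p.getVert_of_length_le (by lia)])
  have hlen : p.length ≤ 3 := by exact_mod_cast hp.trans_le hle
  refine h (p.getVert 1) (p.getVert 2) ?_ ?_ (step 1)
  · simpa using step 0
  · simpa [p.getVert_of_length_le hlen] using step 2

variable {φ : V → W}

theorem edist_comap_le (hsupp : Γ.support ⊆ Set.range φ) {u v : V} (huv : φ u ≠ φ v) :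
    (Γ.comap φ).edist u v ≤ Γ.edist (φ u) (φ v) := by
  suffices H : ∀ {x y : W} (p : Γ.Walk x y) (u : V), φ u = x → φ v = y → x ≠ y →
      (Γ.comap φ).edist u v ≤ p.length from le_iInf fun p => H p u rfl rfl huv
  intro x y p
  induction p with
  | nil => intro _ _ _ hne; exact absurd rfl hne
  | @cons x x' y hadj p ih =>
    rintro u rfl hv -
    rw [Walk.length_cons, Nat.cast_add, Nat.cast_one, add_comm]
    by_cases hx' : x' = y
    · have : (Γ.comap φ).Adj u v := by rwa [comap_adj, hv, ← hx']
      exact (edist_eq_one_iff_adj.2 this).le.trans le_self_add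
    · obtain ⟨w, rfl⟩ := hsupp ⟨_, hadj.symm⟩
      have : (Γ.comap φ).Adj u w := hadj
      exact SimpleGraph.edist_triangle.trans
        (add_le_add (edist_eq_one_iff_adj.2 this).le (ih w rfl hv hx'))

theorem ediam_comap_le (hsupp : Γ.support ⊆ Set.range φ) (hφ : ∀ v, φ v ∈ Γ.support) {n : ℕ∞}
    (hn : 2 ≤ n) (h : ∀ x ∈ Γ.support, ∀ y ∈ Γ.support, Γ.edist x y ≤ n) :
    (Γ.comap φ).ediam ≤ n := by
  refine ediam_le_of_edist_le fun u v => ?_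
  by_cases huv : φ u = φ v
  · obtain ⟨z, hz⟩ := hφ u
    obtain ⟨w, rfl⟩ := hsupp ⟨_, hz.symm⟩
    have huw : (Γ.comap φ).Adj u w := hz
    have hwv : (Γ.comap φ).Adj w v := by rw [comap_adj, ← huv]; exact hz.symm
    exact (edist_le (.cons huw (.cons hwv .nil))).trans hn
  · exact (edist_comap_le hsupp huv).trans (h _ (hφ u) _ (hφ v))

theorem lt_ediam_comap (hsupp : Γ.support ⊆ Set.range φ) {n : ℕ∞}
    (h : ∃ x ∈ Γ.support, ∃ y ∈ Γ.support, n < Γ.edist x y) : n < (Γ.comap φ).ediam := by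
  obtain ⟨x, hx, y, hy, hxy⟩ := h
  obtain ⟨u, rfl⟩ := hsupp hx
  obtain ⟨v, rfl⟩ := hsupp hy
  exact hxy.trans_le ((edist_map_le (Hom.comap φ Γ) u v).trans edist_le_ediam)

end Graph

/-! ### Bounded incomparability in products of forests -/

section Order

/-- The graph on an ordered set `P` joining two incomparable elements that have a common upper
bound. For the poset of cyclic subgroups of a group, this is the difference of the enhanced power
graph and the power graph, up to identifying generators of the same cyclic subgroup. -/
def boundedIncompGraph (P : Type*) [Preorder P] : SimpleGraph P where
  Adj x y := BddAbove {x, y} ∧ IncompRel (· ≤ ·) x y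
  symm := ⟨fun x y h => ⟨Set.pair_comm x y ▸ h.1, h.2.symm⟩⟩
  loopless := ⟨fun _ h => h.2.1 le_rfl⟩

theorem boundedIncompGraph_adj {P : Type*} [Preorder P] {x y : P} :
    (boundedIncompGraph P).Adj x y ↔ (∃ c, x ≤ c ∧ y ≤ c) ∧ ¬ x ≤ y ∧ ¬ y ≤ x := by
  simp only [boundedIncompGraph, BddAbove, Set.Nonempty, upperBounds_insert,
    upperBounds_singleton, Set.mem_inter_iff, Set.mem_Ici, IncompRel]

open Function SimpleGraph

variable {ι : Type*} {α : ι → Type*} [∀ i, PartialOrder (α i)]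

/-- `IsActiveAt x j` says that `x j` can be increased while another coordinate of `x` is nonzero.
These are the witnesses for `x` being a non-isolated vertex of the bounded incomparability graph of
a product of forests. -/
def IsActiveAt [∀ i, OrderBot (α i)] (x : ∀ i, α i) (j : ι) : Prop :=
  ¬ IsMax (x j) ∧ ∃ i ≠ j, x i ≠ ⊥

theorem exists_not_le_apply {x y : ∀ i, α i} (h : ¬ x ≤ y) : ∃ i, ¬ x i ≤ y i := by
  simpa [Pi.le_def] using h

theorem not_apply_le_of_adj_of_isMax {x y : ∀ i, α i} {i : ι}
    (h : (boundedIncompGraph _).Adj x y) (hx : ∀ k ≠ i, IsMax (x k)) : ¬ y i ≤ x i := by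
  obtain ⟨⟨c, hxc, hyc⟩, -, hyx⟩ := boundedIncompGraph_adj.1 h
  obtain ⟨k, hk⟩ := exists_not_le_apply hyx
  by_cases hki : k = i
  · exact hki ▸ hk
  · exact absurd ((hyc k).trans (hx k hki (hxc k))) hk

section Forest

variable (hα : ∀ i (c : α i), IsChain (· ≤ ·) (Set.Iic c))
include hα

theorem apply_le_total_of_adj {x y : ∀ i, α i} (h : (boundedIncompGraph _).Adj x y) (i : ι) :
    x i ≤ y i ∨ y i ≤ x i := by
  obtain ⟨⟨c, hxc, hyc⟩, -⟩ := boundedIncompGraph_adj.1 h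
  exact (hα i (c i)).total (hxc i) (hyc i)

theorem apply_le_total_of_edist_le_one {x y : ∀ i, α i}
    (h : (boundedIncompGraph _).edist x y ≤ 1) (i : ι) : x i ≤ y i ∨ y i ≤ x i := by
  rcases edist_le_one_iff_adj_or_eq.1 h with h | rfl
  · exact apply_le_total_of_adj hα h i
  · exact .inl le_rfl

theorem apply_le_of_edist_le_one {x y : ∀ i, α i} {i : ι} (hx : ∀ k ≠ i, IsMax (x k))
    (h : (boundedIncompGraph _).edist x y ≤ 1) : x i ≤ y i := by
  rcases edist_le_one_iff_adj_or_eq.1 h with h | rfl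
  · exact (apply_le_total_of_adj hα h i).resolve_right (not_apply_le_of_adj_of_isMax h hx)
  · exact le_rfl

theorem three_lt_edist_update [DecidableEq ι] {m : ∀ i, α i} (hm : ∀ i, IsMax (m i)) {i : ι}
    {a b : α i} (hab : IncompRel (· ≤ ·) a b) :
    3 < (boundedIncompGraph _).edist (update m i a) (update m i b) := by
  have hmax (c : α i) (k : ι) (hk : k ≠ i) : IsMax (update m i c k) := by
    rw [update_of_ne hk]; exact hm k
  refine three_lt_edist fun w z haw hzb hwz => ?_
  replace haw : a ≤ w i := by simpa using apply_le_of_edist_le_one hα (hmax a) haw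
  replace hzb : b ≤ z i := by
    simpa using apply_le_of_edist_le_one hα (hmax b) (edist_comm.trans_le hzb)
  have incomp_upper (c : α i) (hac : a ≤ c) (hbc : b ≤ c) : False :=
    ((hα i c).total hac hbc).elim hab.1 hab.2
  rcases apply_le_total_of_edist_le_one hα hwz i with h | h
  · exact incomp_upper _ (haw.trans h) hzb
  · exact incomp_upper _ haw (hzb.trans h)

end Forest

variable [∀ i, OrderBot (α i)]

theorem not_le_apply_of_adj_of_eq_bot {x y : ∀ i, α i} {i : ι}
    (h : (boundedIncompGraph _).Adj x y) (hx : ∀ k ≠ i, x k = ⊥) : ¬ x i ≤ y i := by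
  obtain ⟨k, hk⟩ := exists_not_le_apply h.2.1
  by_cases hki : k = i
  · exact hki ▸ hk
  · exact absurd (hx k hki ▸ bot_le) hk

section Update

variable [DecidableEq ι]

theorem adj_update_bot {x : ∀ i, α i} {i j : ι} (hij : i ≠ j) (hi : x i ≠ ⊥) {c : α j}
    (hc : x j < c) : (boundedIncompGraph _).Adj x (update ⊥ j c) := by
  refine boundedIncompGraph_adj.2 ⟨⟨update x j c, ?_, ?_⟩, fun h => ?_, fun h => ?_⟩
  · exact le_update_iff.2 ⟨hc.le, fun _ _ => le_rfl⟩
  · exact update_le_update_iff.2 ⟨le_rfl, fun _ _ => bot_le⟩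
  · exact hi (le_bot_iff.1 ((le_update_iff.1 h).2 i hij))
  · exact hc.not_ge (update_le_iff.1 h).1

theorem update_bot_adj_update_bot {i j : ι} (hij : i ≠ j) {a : α i} {b : α j} (ha : a ≠ ⊥)
    (hb : b ≠ ⊥) : (boundedIncompGraph _).Adj (update ⊥ i a) (update ⊥ j b) :=
  adj_update_bot hij (by simpa) (by simpa [hij.symm] using hb.bot_lt)

theorem IsActiveAt.exists_adj_update_bot {x : ∀ i, α i} {j : ι} (h : IsActiveAt x j) :
    ∃ c ≠ ⊥, (boundedIncompGraph _).Adj x (update ⊥ j c) := by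
  obtain ⟨hj, i, hij, hi⟩ := h
  obtain ⟨c, hc⟩ := not_isMax_iff.1 hj
  exact ⟨c, hc.ne_bot, adj_update_bot hij hi hc⟩

theorem adj_update_update_bot {x : ∀ i, α i} {j l m : ι} (hmj : m ≠ j) (hml : m ≠ l)
    (hm : x m ≠ ⊥) {b : α j} (hb : x j < b) :
    (boundedIncompGraph _).Adj x (update (update ⊥ l (x l)) j b) := by
  refine boundedIncompGraph_adj.2 ⟨⟨update x j b, ?_, ?_⟩, fun h => ?_, fun h => ?_⟩
  · exact le_update_iff.2 ⟨hb.le, fun _ _ => le_rfl⟩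
  · exact update_le_update_iff.2
      ⟨le_rfl, fun k _ => (update_le_iff.2 ⟨le_rfl, fun _ _ => bot_le⟩ : update ⊥ l (x l) ≤ x) k⟩
  · exact hm (by simpa [hmj, hml] using h m)
  · exact hb.not_ge (by simpa using h j)

end Update

theorem IsActiveAt.mem_support {x : ∀ i, α i} {j : ι} (h : IsActiveAt x j) :
    x ∈ (boundedIncompGraph _).support := by
  classical
  obtain ⟨c, -, hadj⟩ := h.exists_adj_update_bot
  exact ⟨_, hadj⟩

theorem exists_isActiveAt_of_mem_support (hα : ∀ i (c : α i), IsChain (· ≤ ·) (Set.Iic c))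
    {x : ∀ i, α i} (h : x ∈ (boundedIncompGraph _).support) : ∃ j, IsActiveAt x j := by
  obtain ⟨y, h⟩ := h
  have htotal := apply_le_total_of_adj hα h
  obtain ⟨j, hj⟩ := exists_not_le_apply h.2.2
  obtain ⟨i, hi⟩ := exists_not_le_apply h.2.1
  refine ⟨j, not_isMax_iff.2 ⟨y j, ((htotal j).resolve_right hj).lt_of_not_ge hj⟩, i, ?_, ?_⟩
  · rintro rfl
    exact (htotal i).elim hi hj
  · exact fun h => hi (h ▸ bot_le)

theorem edist_le_three_of_isActiveAt_ne {x y : ∀ i, α i} {j l : ι} (hjl : j ≠ l)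
    (hx : IsActiveAt x j) (hy : IsActiveAt y l) : (boundedIncompGraph _).edist x y ≤ 3 := by
  classical
  obtain ⟨c, hc, hxc⟩ := hx.exists_adj_update_bot
  obtain ⟨d, hd, hyd⟩ := hy.exists_adj_update_bot
  exact edist_le (.cons hxc (.cons (update_bot_adj_update_bot hjl hc hd) (.cons hyd.symm .nil)))

theorem edist_le_four_of_isActiveAt {x y : ∀ i, α i} {j l : ι}
    (hx : IsActiveAt x j) (hy : IsActiveAt y l) : (boundedIncompGraph _).edist x y ≤ 4 := by
  classical
  by_cases hjl : j = l
  · subst hjl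
    obtain ⟨c, hc, hxc⟩ := hx.exists_adj_update_bot
    obtain ⟨d, hd, hyd⟩ := hy.exists_adj_update_bot
    obtain ⟨i, hij, hi⟩ := hx.2
    exact edist_le (.cons hxc (.cons (update_bot_adj_update_bot hij.symm hc hi)
      (.cons (update_bot_adj_update_bot hij hi hd) (.cons hyd.symm .nil))))
  · exact (edist_le_three_of_isActiveAt_ne hjl hx hy).trans (by decide)

theorem edist_le_two_of_isActiveAt_of_le {x y : ∀ i, α i} {j : ι} (hx : IsActiveAt x j)
    (hy : IsActiveAt y j) (hxy : x j ≤ y j) : (boundedIncompGraph _).edist x y ≤ 2 := by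
  classical
  obtain ⟨-, i, hij, hi⟩ := hx
  obtain ⟨hyj, k, hkj, hk⟩ := hy
  obtain ⟨c, hc⟩ := not_isMax_iff.1 hyj
  exact edist_le (.cons (adj_update_bot hij hi (hxy.trans_lt hc))
    (.cons (adj_update_bot hkj hk hc).symm .nil))

theorem adj_of_forall_eq_bot_or_eq_bot {x y : ∀ i, α i} (hxy : ∀ k, x k = ⊥ ∨ y k = ⊥)
    (hx : x ≠ ⊥) (hy : y ≠ ⊥) : (boundedIncompGraph _).Adj x y := by
  classical
  refine boundedIncompGraph_adj.2 ⟨⟨fun k => if x k = ⊥ then y k else x k, fun k => ?_,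
    fun k => ?_⟩, fun h => hx (funext fun k => ?_), fun h => hy (funext fun k => ?_)⟩
  · by_cases hk : x k = ⊥ <;> simp [hk]
  · by_cases hk : x k = ⊥
    · simp [hk]
    · simp [(hxy k).resolve_left hk]
  · exact (hxy k).elim id fun hk => le_bot_iff.1 (hk ▸ h k)
  · exact (hxy k).elim (fun hk => le_bot_iff.1 (hk ▸ h k)) id

theorem edist_le_two_of_isActiveAt [∀ i, Nontrivial (α i)]
    (hflat : ∀ i (a : α i), ¬ IsMax a → a = ⊥) {x y : ∀ i, α i} {j l : ι}
    (hx : IsActiveAt x j) (hy : IsActiveAt y l) : (boundedIncompGraph _).edist x y ≤ 2 := by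
  classical
  have hxj := hflat j _ hx.1
  have hyl := hflat l _ hy.1
  obtain ⟨-, i, -, hi⟩ := hx
  obtain ⟨-, k, -, hk⟩ := hy
  by_cases hzero : ∃ m, x m = ⊥ ∧ y m = ⊥
  · obtain ⟨m, hxm, hym⟩ := hzero
    obtain ⟨c, hc⟩ := exists_ne (⊥ : α m)
    have hadj (z : ∀ i, α i) {i : ι} (hz : z m = ⊥) (hi : z i ≠ ⊥) :
        (boundedIncompGraph _).Adj z (update ⊥ m c) :=
      adj_update_bot (by rintro rfl; exact hi hz) hi (hz ▸ hc.bot_lt)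
    exact edist_le (.cons (hadj x hxm hi) (.cons (hadj y hym hk).symm .nil))
  push Not at hzero
  by_cases hne : ∃ m, x m ≠ ⊥ ∧ y m ≠ ⊥
  · obtain ⟨m, hxm, hym⟩ := hne
    have hyj := hzero j hxj
    have hxl : x l ≠ ⊥ := fun h => hzero l h hyl
    have hjl : j ≠ l := by rintro rfl; exact hxl hxj
    have hmj : m ≠ j := by rintro rfl; exact hxm hxj
    have hml : m ≠ l := by rintro rfl; exact hym hyl
    have hxz := adj_update_update_bot hmj hml hxm (hxj ▸ hyj.bot_lt)
    have hyz := adj_update_update_bot hml hmj hym (hyl ▸ hxl.bot_lt)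
    rw [update_comm hjl] at hyz
    exact edist_le (.cons hxz (.cons hyz.symm .nil))
  · push Not at hne
    have hadj : (boundedIncompGraph _).Adj x y :=
      adj_of_forall_eq_bot_or_eq_bot (fun m => or_iff_not_imp_left.2 (hne m))
        (fun h => hi (congrFun h i)) (fun h => hk (congrFun h k))
    exact (edist_eq_one_iff_adj.2 hadj).le.trans (by decide)

theorem edist_le_four_of_mem_support (hα : ∀ i (c : α i), IsChain (· ≤ ·) (Set.Iic c))
    {x y : ∀ i, α i} (hx : x ∈ (boundedIncompGraph _).support)
    (hy : y ∈ (boundedIncompGraph _).support) : (boundedIncompGraph _).edist x y ≤ 4 := by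
  obtain ⟨j, hj⟩ := exists_isActiveAt_of_mem_support hα hx
  obtain ⟨l, hl⟩ := exists_isActiveAt_of_mem_support hα hy
  exact edist_le_four_of_isActiveAt hj hl

theorem edist_le_three_of_isChain (hα : ∀ i (c : α i), IsChain (· ≤ ·) (Set.Iic c))
    (hchain : ∀ i, IsChain (· ≤ ·) {a : α i | ¬ IsMax a}) {x y : ∀ i, α i}
    (hx : x ∈ (boundedIncompGraph _).support) (hy : y ∈ (boundedIncompGraph _).support) :
    (boundedIncompGraph _).edist x y ≤ 3 := by
  obtain ⟨j, hj⟩ := exists_isActiveAt_of_mem_support hα hx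
  obtain ⟨l, hl⟩ := exists_isActiveAt_of_mem_support hα hy
  by_cases hjl : j = l
  · subst hjl
    refine le_trans ?_ (by decide : (2 : ℕ∞) ≤ 3)
    rcases (hchain j).total hj.1 hl.1 with h | h
    · exact edist_le_two_of_isActiveAt_of_le hj hl h
    · exact edist_comm.trans_le (edist_le_two_of_isActiveAt_of_le hl hj h)
  · exact edist_le_three_of_isActiveAt_ne hjl hj hl

theorem edist_le_two_of_forall_eq_bot [∀ i, Nontrivial (α i)]
    (hα : ∀ i (c : α i), IsChain (· ≤ ·) (Set.Iic c))
    (hflat : ∀ i (a : α i), ¬ IsMax a → a = ⊥) {x y : ∀ i, α i}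
    (hx : x ∈ (boundedIncompGraph _).support) (hy : y ∈ (boundedIncompGraph _).support) :
    (boundedIncompGraph _).edist x y ≤ 2 := by
  obtain ⟨j, hj⟩ := exists_isActiveAt_of_mem_support hα hx
  obtain ⟨l, hl⟩ := exists_isActiveAt_of_mem_support hα hy
  exact edist_le_two_of_isActiveAt hflat hj hl

theorem exists_forall_isMax_apply [∀ i, Finite (α i)] : ∃ m : ∀ i, α i, ∀ i, IsMax (m i) := by
  have hmax (i : ι) : ∃ c : α i, IsMax c := by
    obtain ⟨c, -, hc⟩ := Finite.exists_le_maximal (p := fun _ => True) (a := (⊥ : α i)) trivial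
    exact ⟨c, maximal_true.1 hc⟩
  choose m hm using hmax
  exact ⟨m, hm⟩

section Nontrivial

variable [Nontrivial ι] [∀ i, Nontrivial (α i)]

theorem isActiveAt_update_of_isMax [DecidableEq ι] {m : ∀ i, α i} (hm : ∀ i, IsMax (m i)) {i : ι}
    {a : α i} (ha : ¬ IsMax a) : IsActiveAt (update m i a) i := by
  obtain ⟨k, hk⟩ := exists_ne i
  refine ⟨by rwa [update_self], k, hk, ?_⟩
  rw [update_of_ne hk]
  exact fun h => not_isMax_bot (h ▸ hm k)

theorem exists_isActiveAt_update_bot [DecidableEq ι] {i : ι} {a : α i} (ha : a ≠ ⊥) :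
    ∃ j, IsActiveAt (update ⊥ i a) j := by
  obtain ⟨j, hj⟩ := exists_ne i
  exact ⟨j, by rw [update_of_ne hj]; exact not_isMax_bot, i, hj.symm, by simpa⟩

theorem two_lt_edist_update_update_bot [DecidableEq ι]
    (hα : ∀ i (c : α i), IsChain (· ≤ ·) (Set.Iic c)) {m : ∀ i, α i} (hm : ∀ i, IsMax (m i))
    (i : ι) (a : α i) :
    2 < (boundedIncompGraph _).edist (update m i a) (update ⊥ i a) := by
  have hupper {w : ∀ i, α i} (h : (boundedIncompGraph _).Adj (update m i a) w) : ¬ w i ≤ a := by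
    have hmax (k : ι) (hk : k ≠ i) : IsMax (update m i a k) := by
      rw [update_of_ne hk]; exact hm k
    rw [← update_self i a m]
    exact not_apply_le_of_adj_of_isMax h hmax
  have hlower {w : ∀ i, α i} (h : (boundedIncompGraph _).Adj (update ⊥ i a) w) : ¬ a ≤ w i := by
    rw [← update_self i a ⊥]
    exact not_le_apply_of_adj_of_eq_bot h fun k hk => update_of_ne hk _ _
  refine two_lt_edist_iff.2 ⟨fun h => ?_, fun h => hupper h (update_self ..).le, ?_⟩
  · obtain ⟨k, hk⟩ := exists_ne i
    have hbot : m k = ⊥ := by simpa [hk] using congrFun h k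
    exact not_isMax_bot (hbot ▸ hm k)
  · refine Set.eq_empty_of_forall_notMem fun w hw => ?_
    obtain ⟨hmw, hbw⟩ := (mem_commonNeighbors _).1 hw
    have htotal := apply_le_total_of_adj hα hmw i
    rw [update_self] at htotal
    exact htotal.elim (hlower hbw) (hupper hmw)

variable [∀ i, Finite (α i)] (hα : ∀ i (c : α i), IsChain (· ≤ ·) (Set.Iic c))
include hα

theorem exists_mem_support_three_lt_edist
    (h : ∃ i, ¬ IsChain (· ≤ ·) {a : α i | ¬ IsMax a}) :
    ∃ x ∈ (boundedIncompGraph (∀ i, α i)).support,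
      ∃ y ∈ (boundedIncompGraph (∀ i, α i)).support, 3 < (boundedIncompGraph _).edist x y := by
  classical
  obtain ⟨m, hm⟩ := exists_forall_isMax_apply (α := α)
  obtain ⟨i, h⟩ := h
  simp only [IsChain, Set.Pairwise] at h
  push Not at h
  obtain ⟨a, ha, b, hb, -, hab⟩ := h
  exact ⟨_, (isActiveAt_update_of_isMax hm ha).mem_support, _,
    (isActiveAt_update_of_isMax hm hb).mem_support, three_lt_edist_update hα hm hab⟩

theorem exists_mem_support_two_lt_edist {i : ι} {a : α i} (ha : ¬ IsMax a) (ha' : a ≠ ⊥) :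
    ∃ x ∈ (boundedIncompGraph (∀ i, α i)).support,
      ∃ y ∈ (boundedIncompGraph (∀ i, α i)).support, 2 < (boundedIncompGraph _).edist x y := by
  classical
  obtain ⟨m, hm⟩ := exists_forall_isMax_apply (α := α)
  obtain ⟨j, hj⟩ := exists_isActiveAt_update_bot ha'
  exact ⟨_, (isActiveAt_update_of_isMax hm ha).mem_support, _, hj.mem_support,
    two_lt_edist_update_update_bot hα hm i a⟩

end Nontrivial

end Order

/-! ### Difference graphs of groups -/

section Group

open Subgroup SimpleGraph

section CyclicSubgroup

variable {G : Type*} [Group G]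

/-- The cyclic subgroups of `G`, ordered by inclusion. -/
abbrev CyclicSubgroup (G : Type*) [Group G] := {C : Subgroup G // IsCyclic C}

namespace CyclicSubgroup

instance : OrderBot (CyclicSubgroup G) :=
  Subtype.orderBot Bot.isCyclic

/-- The cyclic subgroup generated by an element. -/
def zpowers (x : G) : CyclicSubgroup G :=
  ⟨Subgroup.zpowers x, inferInstance⟩

theorem zpowers_surjective : Function.Surjective (zpowers : G → CyclicSubgroup G) := by
  rintro ⟨C, hC⟩
  obtain ⟨x, rfl⟩ := C.isCyclic_iff_exists_zpowers_eq_top.1 hC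
  exact ⟨x, rfl⟩

theorem zpowers_le_zpowers {x y : G} : zpowers x ≤ zpowers y ↔ x ∈ Subgroup.zpowers y :=
  Subgroup.zpowers_le

theorem zpowers_lt_zpowers {x y : G} :
    zpowers x < zpowers y ↔ Subgroup.zpowers x < Subgroup.zpowers y :=
  Iff.rfl

theorem zpowers_eq_bot {x : G} : zpowers x = ⊥ ↔ x = 1 := by
  rw [← le_bot_iff, ← Subgroup.zpowers_eq_bot, ← le_bot_iff]
  rfl

theorem not_isMax_zpowers {x : G} :
    ¬ IsMax (zpowers x) ↔ ∃ y, Subgroup.zpowers x < Subgroup.zpowers y := by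
  simp only [not_isMax_iff, zpowers_surjective.exists, zpowers_lt_zpowers]

instance [Nontrivial G] : Nontrivial (CyclicSubgroup G) := by
  obtain ⟨x, hx⟩ := exists_ne (1 : G)
  exact ⟨zpowers x, ⊥, zpowers_eq_bot.not.2 hx⟩

end CyclicSubgroup

theorem pow_mem_zpowers_pow_of_gcd_dvd {x : G} {m n : ℕ} (h : n.gcd (orderOf x) ∣ m) :
    x ^ m ∈ zpowers (x ^ n) := by
  obtain ⟨k, rfl⟩ := h
  have hgcd : x ^ n.gcd (orderOf x) = (x ^ n) ^ n.gcdA (orderOf x) := by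
    rw [← zpow_natCast x (n.gcd _), Nat.gcd_eq_gcd_ab, zpow_add, zpow_mul, zpow_mul, zpow_natCast,
      zpow_natCast, pow_orderOf_eq_one, one_zpow, mul_one]
  rw [pow_mul, hgcd]
  exact pow_mem (zpow_mem (mem_zpowers _) _) _

theorem isChain_Iic_cyclicSubgroup [Finite G] {p : ℕ} [Fact p.Prime] (hG : IsPGroup p G)
    (c : CyclicSubgroup G) : IsChain (· ≤ ·) (Set.Iic c) := by
  intro a ha b hb _
  obtain ⟨x, rfl⟩ := CyclicSubgroup.zpowers_surjective a
  obtain ⟨y, rfl⟩ := CyclicSubgroup.zpowers_surjective b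
  obtain ⟨z, rfl⟩ := CyclicSubgroup.zpowers_surjective c
  rw [Set.mem_Iic, CyclicSubgroup.zpowers_le_zpowers, ← mem_powers_iff_mem_zpowers] at ha hb
  obtain ⟨m, rfl⟩ := ha
  obtain ⟨n, rfl⟩ := hb
  obtain ⟨N, hN⟩ := IsPGroup.iff_orderOf.1 hG z
  have gcd_eq_pow (k : ℕ) : ∃ i, k.gcd (orderOf z) = p ^ i := by
    obtain ⟨i, -, hi⟩ := (Nat.dvd_prime_pow Fact.out).1 ((k.gcd_dvd_right _).trans hN.dvd)
    exact ⟨i, hi⟩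
  obtain ⟨i, hi⟩ := gcd_eq_pow m
  obtain ⟨j, hj⟩ := gcd_eq_pow n
  simp only [CyclicSubgroup.zpowers_le_zpowers]
  rcases le_total i j with hij | hij
  · exact .inr <| pow_mem_zpowers_pow_of_gcd_dvd <|
      hi ▸ (pow_dvd_pow p hij).trans (hj ▸ n.gcd_dvd_left _)
  · exact .inl <| pow_mem_zpowers_pow_of_gcd_dvd <|
      hj ▸ (pow_dvd_pow p hij).trans (hi ▸ m.gcd_dvd_left _)

end CyclicSubgroup

section DiffGraph

variable {G : Type*} [Group G]

theorem isCyclic_closure_pair_iff {x y : G} :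
    IsCyclic (closure ({x, y} : Set G)) ↔ ∃ z, x ∈ zpowers z ∧ y ∈ zpowers z := by
  constructor
  · intro h
    obtain ⟨z, hz⟩ := (Subgroup.isCyclic_iff_exists_zpowers_eq_top _).1 h
    exact ⟨z, hz ▸ subset_closure (by simp), hz ▸ subset_closure (by simp)⟩
  · rintro ⟨z, hx, hy⟩
    exact isCyclic_of_le <| (closure_le (zpowers z)).2 (Set.pair_subset hx hy)

theorem diffAdj_iff {x y : G} :
    diffAdj x y ↔ (∃ z, x ∈ zpowers z ∧ y ∈ zpowers z) ∧ x ∉ zpowers y ∧ y ∉ zpowers x := by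
  simp only [diffAdj, isCyclic_closure_pair_iff, mem_zpowers_iff, eq_comm]
  tauto

theorem diffGraph_adj {u v : DiffVertex G} : (diffGraph G).Adj u v ↔ diffAdj u.1 v.1 := by
  simp only [diffGraph, SimpleGraph.fromRel_adj]
  refine ⟨?_, fun h => ⟨?_, .inl h⟩⟩
  · rintro ⟨-, h | h⟩
    · exact h
    · rw [diffAdj_iff] at h ⊢
      tauto
  · rintro rfl
    exact (diffAdj_iff.1 h).2.1 (mem_zpowers _)

section Comap

variable {P : Type*} [Preorder P] {φ : G → P} (hφ : Function.Surjective φ)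
  (hle : ∀ x y, x ∈ zpowers y ↔ φ x ≤ φ y)
include hφ hle

theorem diffAdj_iff_boundedIncompGraph_adj {x y : G} :
    diffAdj x y ↔ (boundedIncompGraph P).Adj (φ x) (φ y) := by
  simp only [diffAdj_iff, boundedIncompGraph_adj, hφ.exists, hle]

theorem diffGraph_eq_comap :
    diffGraph G = (boundedIncompGraph P).comap fun v : DiffVertex G => φ v := by
  ext u v
  rw [diffGraph_adj, comap_adj, diffAdj_iff_boundedIncompGraph_adj hφ hle]

theorem mem_support_of_diffVertex (v : DiffVertex G) :
    φ v ∈ (boundedIncompGraph P).support := by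
  obtain ⟨x, y, hxy⟩ := v
  exact ⟨φ y, (diffAdj_iff_boundedIncompGraph_adj hφ hle).1 hxy⟩

theorem support_subset_range_diffVertex :
    (boundedIncompGraph P).support ⊆ Set.range fun v : DiffVertex G => φ v := by
  rintro _ ⟨b, h⟩
  obtain ⟨y, rfl⟩ := hφ b
  obtain ⟨x, rfl⟩ := hφ ‹_›
  exact ⟨⟨x, y, (diffAdj_iff_boundedIncompGraph_adj hφ hle).2 h⟩, rfl⟩

theorem ediam_diffGraph_le {n : ℕ∞} (hn : 2 ≤ n)
    (h : ∀ x ∈ (boundedIncompGraph P).support, ∀ y ∈ (boundedIncompGraph P).support,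
      (boundedIncompGraph P).edist x y ≤ n) : (diffGraph G).ediam ≤ n := by
  rw [diffGraph_eq_comap hφ hle]
  exact ediam_comap_le (support_subset_range_diffVertex hφ hle)
    (mem_support_of_diffVertex hφ hle) hn h

theorem lt_ediam_diffGraph {n : ℕ∞}
    (h : ∃ x ∈ (boundedIncompGraph P).support, ∃ y ∈ (boundedIncompGraph P).support,
      n < (boundedIncompGraph P).edist x y) : n < (diffGraph G).ediam := by
  rw [diffGraph_eq_comap hφ hle]
  exact lt_ediam_comap (support_subset_range_diffVertex hφ hle) h

end Comap

/-- An element `x` of order greater than two and its inverse generate the same subgroup, so they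
are distinct non-adjacent vertices. -/
theorem one_lt_ediam_diffGraph {x y : G} (h : diffAdj x y) (hx : x ^ 2 ≠ 1) :
    1 < (diffGraph G).ediam := by
  have hinv : diffAdj x⁻¹ y := by simpa [diffAdj_iff] using diffAdj_iff.1 h
  refine lt_of_lt_of_le (lt_of_not_ge fun hle => ?_) <|
    edist_le_ediam (u := ⟨x, y, h⟩) (v := ⟨x⁻¹, y, hinv⟩)
  rcases edist_le_one_iff_adj_or_eq.1 hle with hadj | heq
  · exact (diffAdj_iff.1 (diffGraph_adj.1 hadj)).2.1 (by simp)
  · exact hx (by rw [pow_two, ← inv_eq_iff_mul_eq_one]; exact (congrArg Subtype.val heq).symm)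

theorem diffAdj_of_coprime {x y : G} (hxy : Commute x y) (hcop : (orderOf x).Coprime (orderOf y))
    (hx : x ≠ 1) (hy : y ≠ 1) : diffAdj x y := by
  have mem_left {a b : G} (hab : Commute a b) (hcop : (orderOf a).Coprime (orderOf b)) :
      a ∈ zpowers (a * b) := by
    have : a ^ orderOf b ∈ zpowers (a * b) :=
      ⟨orderOf b, by simp [hab.mul_pow, pow_orderOf_eq_one]⟩
    have ha : a ∈ zpowers (a ^ orderOf b) := by simpa [mem_zpowers_pow_iff] using hcop.symm
    exact zpowers_le.2 this ha
  have notMem {a b : G} (ha : a ≠ 1) (hcop : (orderOf a).Coprime (orderOf b)) :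
      a ∉ zpowers b := fun h =>
    ha (orderOf_eq_one_iff.1 (Nat.Coprime.eq_one_of_dvd hcop (orderOf_dvd_of_mem_zpowers h)))
  exact diffAdj_iff.2 ⟨⟨x * y, mem_left hxy hcop, hxy.eq ▸ mem_left hxy.symm hcop.symm⟩,
    notMem hx hcop, notMem hy hcop.symm⟩

end DiffGraph

section Product

variable {ι : Type*} {H : ι → Type*} [∀ i, Group (H i)]

theorem mem_zpowers_pi_iff [Finite ι] [∀ i, Finite (H i)] {x y : ∀ i, H i}
    (hy : Pairwise fun i j => (orderOf (y i)).Coprime (orderOf (y j))) :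
    x ∈ zpowers y ↔ ∀ i, x i ∈ zpowers (y i) := by
  have := Fintype.ofFinite ι
  refine ⟨fun ⟨k, hk⟩ i => ⟨k, congrFun hk i⟩, fun h => ?_⟩
  choose k hk using fun i => mem_powers_iff_mem_zpowers.2 (h i)
  obtain ⟨K, hK⟩ := Nat.chineseRemainderOfFinset k (fun i => orderOf (y i)) Finset.univ
    (fun i _ => (orderOf_pos (y i)).ne') (fun i _ j _ hij => hy hij)
  refine ⟨K, funext fun i => ?_⟩
  simp only [zpow_natCast, Pi.pow_apply, ← hk i]
  exact pow_eq_pow_iff_modEq.2 (hK i (Finset.mem_univ i))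

variable {G : Type*} [Group G]

/-- The cyclic subgroups generated by the components of an element under a product
decomposition. -/
def cyclicCoords (e : G ≃* ∀ i, H i) (x : G) (i : ι) : CyclicSubgroup (H i) :=
  .zpowers (e x i)

theorem cyclicCoords_surjective (e : G ≃* ∀ i, H i) : Function.Surjective (cyclicCoords e) := by
  intro C
  choose z hz using fun i => CyclicSubgroup.zpowers_surjective (C i)
  exact ⟨e.symm z, funext fun i => by simp [cyclicCoords, hz]⟩

theorem mem_zpowers_iff_cyclicCoords_le [Finite ι] [∀ i, Finite (H i)]
    (hH : Pairwise fun i j => (Nat.card (H i)).Coprime (Nat.card (H j)))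
    (e : G ≃* ∀ i, H i) (x y : G) : x ∈ zpowers y ↔ cyclicCoords e x ≤ cyclicCoords e y := by
  have hy : Pairwise fun i j => (orderOf (e y i)).Coprime (orderOf (e y j)) := fun i j hij =>
    (hH hij).of_dvd (orderOf_dvd_natCard _) (orderOf_dvd_natCard _)
  simp only [Pi.le_def, cyclicCoords, CyclicSubgroup.zpowers_le_zpowers, ← mem_zpowers_pi_iff hy]
  rw [← mem_map_iff_mem e.injective (f := e.toMonoidHom), MonoidHom.map_zpowers]
  rfl

end Product

section PGroup

variable {H : Type*} [Group H] {p : ℕ} [Fact p.Prime]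

theorem orderOf_dvd_total (hH : IsPGroup p H) (x y : H) :
    orderOf x ∣ orderOf y ∨ orderOf y ∣ orderOf x := by
  obtain ⟨m, hm⟩ := IsPGroup.iff_orderOf.1 hH x
  obtain ⟨n, hn⟩ := IsPGroup.iff_orderOf.1 hH y
  rw [hm, hn]
  exact (le_total m n).imp (pow_dvd_pow p) (pow_dvd_pow p)

variable [Finite H]

theorem zpowers_eq_of_le_of_orderOf_le {x y : H} (h : zpowers x ≤ zpowers y)
    (hord : orderOf y ≤ orderOf x) : zpowers x = zpowers y :=
  Subgroup.eq_of_le_of_card_ge h (by rwa [Nat.card_zpowers, Nat.card_zpowers])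

theorem forall_cyclicSubgroup_eq_bot_iff (hH : IsPGroup p H) :
    (∀ a : CyclicSubgroup H, ¬ IsMax a → a = ⊥) ↔ ∀ x : H, x ^ p = 1 := by
  simp only [CyclicSubgroup.zpowers_surjective.forall, CyclicSubgroup.not_isMax_zpowers,
    CyclicSubgroup.zpowers_eq_bot]
  constructor
  · intro h x
    rcases eq_or_ne x 1 with rfl | hx
    · exact one_pow p
    refine h _ ⟨x, lt_of_le_not_ge (zpowers_le.2 (npow_mem_zpowers x p)) fun hle => ?_⟩
    have hgcd : p.gcd (orderOf x) = 1 := mem_zpowers_pow_iff.1 (zpowers_le.1 hle)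
    rw [Nat.gcd_eq_left (hH.dvd_orderOf hx)] at hgcd
    exact (Fact.out : p.Prime).ne_one hgcd
  · rintro h x ⟨y, hlt⟩
    by_contra hx
    have hxp : orderOf x = p := orderOf_eq_prime (h x) hx
    exact hlt.ne <| zpowers_eq_of_le_of_orderOf_le hlt.le <|
      hxp ▸ orderOf_le_of_pow_eq_one (Fact.out : p.Prime).pos (h y)

/-- Of two incomparable cyclic subgroups, the larger one can be replaced by its subgroup of the
order of the smaller one. -/
theorem not_isChain_cyclicSubgroup_iff (hH : IsPGroup p H) :
    ¬ IsChain (· ≤ ·) {a : CyclicSubgroup H | ¬ IsMax a} ↔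
      ∃ u v : H, zpowers u ≠ zpowers v ∧ orderOf u = orderOf v ∧
        (∃ w, zpowers u < zpowers w) ∧ ∃ w, zpowers v < zpowers w := by
  constructor
  · have shrink {x y : H} (hxy : x ∉ zpowers y) (hdvd : orderOf x ∣ orderOf y)
        (hx : ∃ w, zpowers x < zpowers w) (hy : ∃ w, zpowers y < zpowers w) :
        ∃ u v : H, zpowers u ≠ zpowers v ∧ orderOf u = orderOf v ∧
          (∃ w, zpowers u < zpowers w) ∧ ∃ w, zpowers v < zpowers w := by
      have hle : zpowers (y ^ (orderOf y / orderOf x)) ≤ zpowers y :=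
        zpowers_le.2 (npow_mem_zpowers y _)
      exact ⟨x, _, fun h => hxy (zpowers_le.1 (h.trans_le hle)),
        (orderOf_pow_orderOf_div (orderOf_pos y).ne' hdvd).symm, hx, hy.imp fun _ => hle.trans_lt⟩
    simp only [IsChain, Set.Pairwise, CyclicSubgroup.zpowers_surjective.forall, Set.mem_ofPred_eq,
      CyclicSubgroup.not_isMax_zpowers, CyclicSubgroup.zpowers_le_zpowers]
    push Not
    rintro ⟨x, hx, y, hy, -, hxy, hyx⟩
    exact (orderOf_dvd_total hH x y).elim (shrink hxy · hx hy) (shrink hyx · hy hx)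
  · rintro ⟨u, v, hne, hord, hu, hv⟩ hchain
    rcases hchain.total (CyclicSubgroup.not_isMax_zpowers.2 hu)
      (CyclicSubgroup.not_isMax_zpowers.2 hv) with h | h
    · exact hne (zpowers_eq_of_le_of_orderOf_le h hord.ge)
    · exact hne (zpowers_eq_of_le_of_orderOf_le h hord.le).symm

end PGroup

section Sylow

variable {G : Type*} [Group G]

theorem map_subtype_zpowers {K : Subgroup G} (u : K) :
    (zpowers u).map K.subtype = zpowers (u : G) :=
  MonoidHom.map_zpowers K.subtype u

theorem zpowers_coe_inj {K : Subgroup G} {u v : K} :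
    zpowers (u : G) = zpowers (v : G) ↔ zpowers u = zpowers v := by
  rw [← map_subtype_zpowers, ← map_subtype_zpowers]
  exact (map_injective K.subtype_injective).eq_iff

theorem zpowers_coe_lt_zpowers_coe {K : Subgroup G} {u v : K} :
    zpowers (u : G) < zpowers (v : G) ↔ zpowers u < zpowers v := by
  rw [← map_subtype_zpowers, ← map_subtype_zpowers, map_subtype_lt_map_subtype]

theorem exists_mem_sylow_of_orderOf_eq_pow {p n : ℕ} {x : G} (hx : orderOf x = p ^ n) :
    ∃ P : Sylow p G, x ∈ P := by
  have hp : IsPGroup p (zpowers x) := IsPGroup.of_card (by rw [Nat.card_zpowers, hx])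
  exact hp.exists_le_sylow.imp fun P hP => hP (mem_zpowers x)

theorem commute_of_orderOf_eq_prime [Finite G] [Group.IsNilpotent G] {p q : ℕ} [Fact p.Prime]
    [Fact q.Prime] (hpq : p ≠ q) {x y : G} (hx : orderOf x = p) (hy : orderOf y = q) :
    Commute x y := by
  obtain ⟨P, hP⟩ := exists_mem_sylow_of_orderOf_eq_pow (hx.trans (pow_one p).symm)
  obtain ⟨Q, hQ⟩ := exists_mem_sylow_of_orderOf_eq_pow (hy.trans (pow_one q).symm)
  exact commute_of_normal_of_disjoint _ _ inferInstance inferInstance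
    (IsPGroup.disjoint_of_ne p q hpq _ _ P.isPGroup' Q.isPGroup') x y hP hQ

variable [Finite G]

variable (G) in
/-- The nontrivial Sylow subgroups of `G`, as pairs of a prime divisor of the order and a Sylow
subgroup for it. -/
abbrev SylowIndex := Σ p : (Nat.card G).primeFactors, Sylow p G

namespace SylowIndex

instance (p : (Nat.card G).primeFactors) : Fact (p : ℕ).Prime :=
  ⟨Nat.prime_of_mem_primeFactors p.2⟩

instance (i : SylowIndex G) : Nontrivial i.2 :=
  (Subgroup.nontrivial_iff_ne_bot _).2 <|
    i.2.ne_bot_of_dvd_card (Nat.dvd_of_mem_primeFactors i.1.2)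

end SylowIndex

theorem squarefree_exponent_iff :
    Squarefree (Monoid.exponent G) ↔ ∀ (i : SylowIndex G) (x : i.2), x ^ (i.1 : ℕ) = 1 := by
  constructor
  · intro h i x
    obtain ⟨n, hn⟩ := isPGroup_iff_orderOf_dvd_pow.1 i.2.isPGroup' x
    have hx : Squarefree (orderOf x) :=
      h.squarefree_of_dvd (Subgroup.orderOf_coe x ▸ Monoid.order_dvd_exponent (x : G))
    exact orderOf_dvd_iff_pow_eq_one.1 (hx.isRadical n _ hn)
  · rw [Nat.squarefree_iff_factorization_le_one Monoid.exponent_ne_zero_of_finite]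
    intro h p
    by_contra! hlt
    have hp : p ∈ (Monoid.exponent G).primeFactors :=
      Nat.support_factorization _ ▸ Finsupp.mem_support_iff.2 (by lia)
    have hprime := Nat.prime_of_mem_primeFactors hp
    obtain ⟨x, hx⟩ := hprime.exists_orderOf_eq_pow_factorization_exponent G
    obtain ⟨P, hxP⟩ := exists_mem_sylow_of_orderOf_eq_pow hx
    have hcard := Nat.primeFactors_mono Group.exponent_dvd_nat_card Nat.card_pos.ne' hp
    have hxp : x ^ p = 1 := congrArg Subtype.val (h ⟨⟨p, hcard⟩, P⟩ ⟨x, hxP⟩)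
    have hdvd : p ^ (Monoid.exponent G).factorization p ∣ p ^ 1 := by
      rw [← hx, pow_one]
      exact orderOf_dvd_of_pow_eq_one hxp
    exact hlt.not_ge ((Nat.pow_dvd_pow_iff_le_right hprime.one_lt).1 hdvd)

theorem squarefree_exponent_iff_forall_eq_bot : Squarefree (Monoid.exponent G) ↔
    ∀ (i : SylowIndex G) (a : CyclicSubgroup i.2), ¬ IsMax a → a = ⊥ := by
  rw [squarefree_exponent_iff]
  exact forall_congr' fun i => (forall_cyclicSubgroup_eq_bot_iff i.2.isPGroup').symm

theorem isPsiGroup_iff : IsPsiGroup G ↔ ∃ i : SylowIndex G, ∃ u v : i.2,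
    zpowers u ≠ zpowers v ∧ orderOf u = orderOf v ∧
      (∃ w, zpowers u < zpowers w) ∧ ∃ w, zpowers v < zpowers w := by
  constructor
  · rintro ⟨p, hp, P, u, v, hu, hv, hne, hord, ⟨w, hw, huw⟩, w', hw', hvw⟩
    have := Fact.mk hp
    lift u to P using hu
    lift v to P using hv
    lift w to P using hw
    lift w' to P using hw'
    have hw1 : w ≠ 1 := by
      rintro rfl
      simp at huw
    have hcard : p ∈ (Nat.card G).primeFactors := Nat.mem_primeFactors.2 ⟨hp,
      ((P.isPGroup'.dvd_orderOf hw1).trans (orderOf_dvd_natCard w)).trans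
        P.card_subgroup_dvd_card, Nat.card_pos.ne'⟩
    rw [Subgroup.orderOf_coe, Subgroup.orderOf_coe] at hord
    exact ⟨⟨⟨p, hcard⟩, P⟩, u, v, zpowers_coe_inj.not.1 hne, hord,
      ⟨w, zpowers_coe_lt_zpowers_coe.1 huw⟩, w', zpowers_coe_lt_zpowers_coe.1 hvw⟩
  · rintro ⟨⟨p, P⟩, u, v, hne, hord, ⟨w, huw⟩, w', hvw⟩
    refine ⟨p, Nat.prime_of_mem_primeFactors p.2, P, u, v, u.2, v.2,
      zpowers_coe_inj.not.2 hne, ?_,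
      ⟨w, w.2, zpowers_coe_lt_zpowers_coe.2 huw⟩, w', w'.2, zpowers_coe_lt_zpowers_coe.2 hvw⟩
    rwa [Subgroup.orderOf_coe, Subgroup.orderOf_coe]

theorem isPsiGroup_iff_exists_not_isChain : IsPsiGroup G ↔
    ∃ i : SylowIndex G, ¬ IsChain (· ≤ ·) {a : CyclicSubgroup i.2 | ¬ IsMax a} := by
  rw [isPsiGroup_iff]
  exact exists_congr fun i => (not_isChain_cyclicSubgroup_iff i.2.isPGroup').symm

theorem isChain_Iic_sylow (i : SylowIndex G) (c : CyclicSubgroup i.2) :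
    IsChain (· ≤ ·) (Set.Iic c) :=
  isChain_Iic_cyclicSubgroup i.2.isPGroup' c

section Nilpotent

variable [Group.IsNilpotent G]

theorem pairwise_coprime_card_sylow :
    Pairwise fun i j : SylowIndex G => (Nat.card i.2).Coprime (Nat.card j.2) := by
  rintro ⟨p, P⟩ ⟨q, Q⟩ hne
  refine IsPGroup.coprime_card_of_ne p q (fun hpq => hne ?_) _ _ P.isPGroup' Q.isPGroup'
  obtain rfl := Subtype.ext hpq
  have := P.unique_of_normal inferInstance
  rw [Subsingleton.elim P Q]

theorem nonempty_mulEquiv_pi_sylow : Nonempty (G ≃* ∀ i : SylowIndex G, i.2) := by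
  have e := Sylow.directProductOfNormal (G := G) inferInstance
  exact ⟨e.symm.trans
    ⟨(Equiv.piCurry fun (p : (Nat.card G).primeFactors) (P : Sylow p G) => P).symm,
      fun _ _ => rfl⟩⟩

theorem exists_surjective_mem_zpowers_iff_le :
    ∃ φ : G → ∀ i : SylowIndex G, CyclicSubgroup i.2, Function.Surjective φ ∧
      ∀ x y, x ∈ zpowers y ↔ φ x ≤ φ y := by
  obtain ⟨e⟩ := nonempty_mulEquiv_pi_sylow (G := G)
  exact ⟨cyclicCoords e, cyclicCoords_surjective e,
    mem_zpowers_iff_cyclicCoords_le pairwise_coprime_card_sylow e⟩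

theorem ediam_diffGraph_le_four : (diffGraph G).ediam ≤ 4 := by
  obtain ⟨φ, hφ, hle⟩ := exists_surjective_mem_zpowers_iff_le (G := G)
  exact ediam_diffGraph_le hφ hle (by decide) fun _ hx _ hy =>
    edist_le_four_of_mem_support isChain_Iic_sylow hx hy

theorem ediam_diffGraph_le_three (h : ¬ IsPsiGroup G) : (diffGraph G).ediam ≤ 3 := by
  obtain ⟨φ, hφ, hle⟩ := exists_surjective_mem_zpowers_iff_le (G := G)
  rw [isPsiGroup_iff_exists_not_isChain] at h
  push Not at h
  exact ediam_diffGraph_le hφ hle (by decide) fun _ hx _ hy =>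
    edist_le_three_of_isChain isChain_Iic_sylow h hx hy

theorem ediam_diffGraph_le_two (h : Squarefree (Monoid.exponent G)) :
    (diffGraph G).ediam ≤ 2 := by
  obtain ⟨φ, hφ, hle⟩ := exists_surjective_mem_zpowers_iff_le (G := G)
  exact ediam_diffGraph_le hφ hle le_rfl fun _ hx _ hy =>
    edist_le_two_of_forall_eq_bot isChain_Iic_sylow
      (squarefree_exponent_iff_forall_eq_bot.1 h) hx hy

theorem one_lt_ediam_diffGraph_of_isNilpotent (h : (Nat.card G).primeFactors.Nontrivial) :
    1 < (diffGraph G).ediam := by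
  obtain ⟨p, hp, hp2⟩ := h.exists_ne 2
  obtain ⟨q, hq, hqp⟩ := h.exists_ne p
  have := Fact.mk (Nat.prime_of_mem_primeFactors hp)
  have := Fact.mk (Nat.prime_of_mem_primeFactors hq)
  obtain ⟨x, hx⟩ := exists_prime_orderOf_dvd_card' p (Nat.dvd_of_mem_primeFactors hp)
  obtain ⟨y, hy⟩ := exists_prime_orderOf_dvd_card' q (Nat.dvd_of_mem_primeFactors hq)
  refine one_lt_ediam_diffGraph (x := x) (y := y) (diffAdj_of_coprime
    (commute_of_orderOf_eq_prime hqp.symm hx hy) ?_ ?_ ?_) fun hx2 => hp2 ?_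
  · rw [hx, hy]
    exact (Nat.coprime_primes Fact.out Fact.out).2 hqp.symm
  · rintro rfl
    exact (Fact.out : p.Prime).ne_one (hx ▸ orderOf_one)
  · rintro rfl
    exact (Fact.out : q.Prime).ne_one (hy ▸ orderOf_one)
  · exact (Nat.prime_dvd_prime_iff_eq Fact.out Nat.prime_two).1
      (hx ▸ orderOf_dvd_of_pow_eq_one hx2)

variable [Nontrivial (SylowIndex G)]

theorem two_lt_ediam_diffGraph (h : ¬ Squarefree (Monoid.exponent G)) :
    2 < (diffGraph G).ediam := by
  obtain ⟨φ, hφ, hle⟩ := exists_surjective_mem_zpowers_iff_le (G := G)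
  rw [squarefree_exponent_iff_forall_eq_bot] at h
  push Not at h
  obtain ⟨i, a, ha, ha'⟩ := h
  exact lt_ediam_diffGraph hφ hle (exists_mem_support_two_lt_edist isChain_Iic_sylow ha ha')

theorem three_lt_ediam_diffGraph (h : IsPsiGroup G) : 3 < (diffGraph G).ediam := by
  obtain ⟨φ, hφ, hle⟩ := exists_surjective_mem_zpowers_iff_le (G := G)
  exact lt_ediam_diffGraph hφ hle (exists_mem_support_three_lt_edist isChain_Iic_sylow
    (isPsiGroup_iff_exists_not_isChain.1 h))

end Nilpotent

end Sylow

theorem diam_eq_add_one {V : Type*} {Γ : SimpleGraph V} {n : ℕ} (hlt : n < Γ.ediam)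
    (hle : Γ.ediam ≤ n + 1) : Γ.diam = n + 1 := by
  have : Γ.ediam = (n + 1 : ℕ) := by
    rw [Nat.cast_add_one]
    exact hle.antisymm (ENat.natCast_add_one_le_iff.2 hlt)
  rw [diam, this, ENat.toNat_natCast]

theorem nilpotent_diffGraph_diam_general (G : Type*) [Group G] [Finite G] [Nontrivial G]
    (hnil : Group.IsNilpotent G) (hpp : ¬ IsPrimePow (Nat.card G)) :
    (diffGraph G).Connected ∧
    (Squarefree (Monoid.exponent G) → (diffGraph G).diam = 2) ∧
    (IsPsiGroup G → (diffGraph G).diam = 4) ∧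
    (¬ Squarefree (Monoid.exponent G) → ¬ IsPsiGroup G → (diffGraph G).diam = 3) := by
  have hprimes := (Nat.not_isPrimePow_iff_nontrivial_of_two_le Finite.one_lt_card).1 hpp
  have := hprimes.coe_sort
  have : Nontrivial (SylowIndex G) := Sigma.fst_surjective.nontrivial
  have hlt := one_lt_ediam_diffGraph_of_isNilpotent hprimes
  have : Nontrivial (DiffVertex G) := ediam_ne_zero_iff_nontrivial.1 (zero_lt_one.trans hlt).ne'
  exact ⟨connected_of_ediam_ne_top (ediam_diffGraph_le_four.trans_lt (by decide)).ne,
    fun h => diam_eq_add_one hlt (ediam_diffGraph_le_two h),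
    fun h => diam_eq_add_one (three_lt_ediam_diffGraph h) ediam_diffGraph_le_four,
    fun hsq hpsi => diam_eq_add_one (two_lt_ediam_diffGraph hsq) (ediam_diffGraph_le_three hpsi)⟩

end Group

/-- Theorem 5.9: for a finite non-cyclic nilpotent group `G` whose order is not a prime
power, `𝒟(G)` is connected, and its diameter equals `2` if `exp(G)` is square-free,
`4` if `G` is a `Ψ`-group, and `3` otherwise. -/
theorem nilpotent_diffGraph_diam
    (G : Type*) [Group G] [Finite G] (hnil : Group.IsNilpotent G)
    (hnc : ¬ IsCyclic G) (hpp : ¬ IsPrimePow (Nat.card G)) :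
    (diffGraph G).Connected ∧
    (Squarefree (Monoid.exponent G) → (diffGraph G).diam = 2) ∧
    (IsPsiGroup G → (diffGraph G).diam = 4) ∧
    (¬ Squarefree (Monoid.exponent G) → ¬ IsPsiGroup G → (diffGraph G).diam = 3) := by
  have := Nontrivial.of_not_isCyclic hnc
  exact nilpotent_diffGraph_diam_general G hnil hpp
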